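/- arXiv:1604.01366 — 2 statements merged into one kernel-verified Lean document; each statement's English description precedes it below -/
import Mathlib

section
/- For every (z,w) ∈ A, the orbit (z_n, w_n) = f^n(z,w) does not converge to (0,0). In particular, within any arbitrarily small neighborhood of the origin there are non-fixed points whose orbits remain bounded near the origin but do not converge to the origin. -/
open Filter Topology

/-- The restriction of the map `f(z,w) = (z(1-(z-w)), w(1+(z-w)))` to `ℝ² ⊂ ℂ²`
(`f` maps `ℝ²` into `ℝ²`). -/
noncomputable def fR : ℝ × ℝ → ℝ × ℝ :=
  fun p => (p.1 * (1 - (p.1 - p.2)), p.2 * (1 + (p.1 - p.2)))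

/-- The triangle `A = {(z,w) ∈ ℝ² : z > 0, w > 0, z + w < 1}`. -/
def A : Set (ℝ × ℝ) := {p : ℝ × ℝ | 0 < p.1 ∧ 0 < p.2 ∧ p.1 + p.2 < 1}

/-!
In the coordinates `s = z + w`, `d = z - w` one has `s ∘ fR = s - d ^ 2` and
`(z * w) ∘ fR = z * w * (1 - d ^ 2)`. As `s - d ^ 2 ≤ s * (1 - d ^ 2)` when `s ≤ 1`, the quotient
`z * w / (z + w)` does not decrease along orbits in `A`. It is positive and at most `z`, so `z`
stays bounded away from `0`. On the other hand `s` does not increase, so orbits that start near the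
origin stay near it.
-/

open Set

section Iterate

variable {α β : Type*} [Preorder β] {f : α → α} {s : Set α} {V : α → β} {x : α}

theorem monotone_comp_iterate_of_mapsTo (hf : MapsTo f s s) (hV : ∀ y ∈ s, V y ≤ V (f y))
    (hx : x ∈ s) : Monotone fun n => V (f^[n] x) :=
  monotone_nat_of_le_succ fun n => by
    rw [Function.iterate_succ_apply']
    exact hV _ (hf.iterate n hx)

end Iterate

variable {p : ℝ × ℝ} {r : ℝ}

theorem fst_add_snd_fR (p : ℝ × ℝ) : (fR p).1 + (fR p).2 = p.1 + p.2 - (p.1 - p.2) ^ 2 := by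
  simp only [fR]
  ring

theorem fst_mul_snd_fR (p : ℝ × ℝ) : (fR p).1 * (fR p).2 = p.1 * p.2 * (1 - (p.1 - p.2) ^ 2) := by
  simp only [fR]
  ring

theorem fR_eq_self_iff : fR p = p ↔ p.1 = p.2 := by
  refine ⟨fun h => ?_, fun h => Prod.ext (by simp [fR, h]) (by simp [fR, h])⟩
  have hsum := fst_add_snd_fR p
  rw [h, eq_comm, sub_eq_self, sq_eq_zero_iff] at hsum
  exact sub_eq_zero.1 hsum

/-- The open triangle cut off the positive quadrant by the line `z + w = r`. For `r ≤ 1` it is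
invariant under `fR`, which confines orbits near the origin; `A` is `cornerTriangle 1`. -/
def cornerTriangle (r : ℝ) : Set (ℝ × ℝ) := {p | 0 < p.1 ∧ 0 < p.2 ∧ p.1 + p.2 < r}

theorem cornerTriangle_mono : Monotone cornerTriangle :=
  fun _ _ hr _ ⟨hz, hw, hs⟩ => ⟨hz, hw, hs.trans_le hr⟩

theorem cornerTriangle_subset_ball (r : ℝ) : cornerTriangle r ⊆ Metric.ball 0 r := by
  rintro p ⟨hz, hw, hs⟩
  rw [mem_ball_zero_iff, Prod.norm_def, Real.norm_of_nonneg hz.le, Real.norm_of_nonneg hw.le]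
  exact max_lt (by linarith) (by linarith)

theorem mapsTo_fR_cornerTriangle (hr : r ≤ 1) :
    MapsTo fR (cornerTriangle r) (cornerTriangle r) := by
  rintro p ⟨hz, hw, hs⟩
  refine ⟨mul_pos hz (by linarith), mul_pos hw (by linarith), ?_⟩
  rw [fst_add_snd_fR]
  linarith [sq_nonneg (p.1 - p.2)]

theorem mapsTo_fR_A : MapsTo fR A A :=
  mapsTo_fR_cornerTriangle le_rfl

/-- The parallel sum `(z⁻¹ + w⁻¹)⁻¹` of the coordinates, written as a single quotient; it serves as
a Lyapunov function for `fR`. -/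
noncomputable def parallelSum (p : ℝ × ℝ) : ℝ := p.1 * p.2 / (p.1 + p.2)

theorem parallelSum_pos (hz : 0 < p.1) (hw : 0 < p.2) : 0 < parallelSum p :=
  div_pos (mul_pos hz hw) (add_pos hz hw)

theorem parallelSum_le_fst (hz : 0 < p.1) (hw : 0 < p.2) : parallelSum p ≤ p.1 := by
  refine div_le_of_le_mul₀ (add_pos hz hw).le hz.le ?_
  gcongr
  linarith

theorem parallelSum_le_parallelSum_fR (hz : 0 < p.1) (hw : 0 < p.2) (hs : p.1 + p.2 ≤ 1) :
    parallelSum p ≤ parallelSum (fR p) := by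
  have hpos : 0 < (fR p).1 + (fR p).2 :=
    add_pos (mul_pos hz (by linarith)) (mul_pos hw (by linarith))
  have hsum : (fR p).1 + (fR p).2 ≤ (p.1 + p.2) * (1 - (p.1 - p.2) ^ 2) := by
    rw [fst_add_snd_fR]
    linarith [mul_le_of_le_one_left (sq_nonneg (p.1 - p.2)) hs]
  rw [parallelSum, parallelSum, div_le_div_iff₀ (add_pos hz hw) hpos]
  calc p.1 * p.2 * ((fR p).1 + (fR p).2)
      ≤ p.1 * p.2 * ((p.1 + p.2) * (1 - (p.1 - p.2) ^ 2)) := by gcongr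
    _ = (fR p).1 * (fR p).2 * (p.1 + p.2) := by rw [fst_mul_snd_fR]; ring

theorem parallelSum_le_fst_iterate_fR (hp : p ∈ A) (n : ℕ) : parallelSum p ≤ (fR^[n] p).1 := by
  obtain ⟨hz, hw, -⟩ := mapsTo_fR_A.iterate n hp
  have hmono : Monotone fun n => parallelSum (fR^[n] p) :=
    monotone_comp_iterate_of_mapsTo mapsTo_fR_A
      (fun _ ⟨hz, hw, hs⟩ => parallelSum_le_parallelSum_fR hz hw hs.le) hp
  calc parallelSum p
      ≤ parallelSum (fR^[n] p) := hmono n.zero_le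
    _ ≤ (fR^[n] p).1 := parallelSum_le_fst hz hw

theorem not_tendsto_iterate_fR (hp : p ∈ A) :
    ¬ Tendsto (fun n => fR^[n] p) atTop (𝓝 (0, 0)) := fun hlim =>
  (parallelSum_pos hp.1 hp.2.1).not_ge <|
    ge_of_tendsto' hlim.fst_nhds (parallelSum_le_fst_iterate_fR hp)

/-- Orbits of points of `A` do not converge to the origin.  In particular, arbitrarily close to
the origin there are non-fixed points whose orbits stay near the origin but do not converge
to it. -/
theorem orbits_in_A_do_not_converge_to_origin :
    (∀ p ∈ A, ¬ Tendsto (fun n => fR^[n] p) atTop (𝓝 (0, 0))) ∧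
    (∀ ε : ℝ, 0 < ε → ∃ p : ℝ × ℝ, ‖p‖ < ε ∧ fR p ≠ p ∧ (∀ n : ℕ, ‖fR^[n] p‖ < ε) ∧
      ¬ Tendsto (fun n => fR^[n] p) atTop (𝓝 (0, 0))) := by
  refine ⟨fun p => not_tendsto_iterate_fR, fun ε hε => ?_⟩
  set r := min ε 1
  have hr : 0 < r := lt_min hε one_pos
  have hr1 : r ≤ 1 := min_le_right ε 1
  have hp : (r / 4, r / 2) ∈ cornerTriangle r :=
    ⟨by positivity, by positivity, by linarith⟩
  have hnorm (n : ℕ) : ‖fR^[n] (r / 4, r / 2)‖ < ε :=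
    (mem_ball_zero_iff.1 (cornerTriangle_subset_ball r
      ((mapsTo_fR_cornerTriangle hr1).iterate n hp))).trans_le (min_le_left ε 1)
  have hne : fR (r / 4, r / 2) ≠ (r / 4, r / 2) := fun h => by
    linarith [fR_eq_self_iff.1 h]
  exact ⟨_, hnorm 0, hne, hnorm, not_tendsto_iterate_fR (cornerTriangle_mono hr1 hp)⟩
end

section
/- Let r ≥ 3 be an integer, a ∈ ℂ with a ≠ 0 (or r = 2 and a ∉ {t ∈ ℝ : t ≥ 0}), and let G(x,y) = (x − y² + a·x^{r+1} + η₁(x,y), y − xy + η₂(x,y)), where η₁, η₂ are holomorphic near the origin of ℂ² and satisfy |η_i(x,y)| ≤ C(|y|·‖(x,y)‖² + |x|^{r+2}) for some constant C > 0 on a neighborhood of the origin. Then G has a domain of attraction to the origin along [1:0]: there exists a nonempty open set Ω ⊆ ℂ² with (0,0) ∈ closure(Ω) \ Ω such that for every p ∈ Ω, writing G^n(p) = (x_n, y_n), one has G^n(p) → (0,0), x_n ≠ 0 for all n, and y_n/x_n → 0 as n → ∞. -/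
/-!
The argument of `-1 / (r a)` is at most `π`, and it is not `π` if `r = 2`, so the principal `r`-th
root `v` of this number satisfies `0 < Re v`, and `r a v ^ r = -1`. Where `|y| ≤ |x| ^ r`, both
`y ^ 2` and the perturbations are `o(x ^ (r + 1))`, so the first variable follows the
one-dimensional map `x ↦ x + a x ^ (r + 1)`, which in the Fatou coordinate `u = (v / x) ^ r` is
nearly `u ↦ u + 1`. Hence a narrow cone around the positive real `u`-axis, far from the origin, is
mapped into itself and `Re u` increases to infinity along orbits, that is, `x → 0`.

Over this cone `Re x ≥ ε |x|`, because `x` is nearly a positive multiple of `v`. The quotient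
`q = y / x ^ r` changes to `q (1 - x) + o(x)`, and `|1 - x| ≤ 1 - ε |x| + O(|x| ^ 2)`, so `|q| < 1`
is preserved. Since `2 ≤ r`, the bound `|y| < |x| ^ r` also gives `y / x → 0`.
-/

open Filter Topology

open Asymptotics Set

section Geometry

theorem re_cpow_ofReal_pos {z : ℂ} (hz : z ≠ 0) {s : ℝ} (h : |z.arg * s| < Real.pi / 2) :
    0 < (z ^ (s : ℂ)).re := by
  rw [Complex.cpow_ofReal_re]
  exact mul_pos (Real.rpow_pos_of_pos (norm_pos_iff.2 hz) s) (Real.cos_pos_of_mem_Ioo (abs_lt.1 h))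

theorem arg_pow_eq_natCast_mul {z : ℂ} {n : ℕ} (h : n * |z.arg| < Real.pi) :
    (z ^ n).arg = n * z.arg := by
  rw [← Nat.abs_cast n, ← abs_mul, abs_lt] at h
  rw [← Complex.arg_coe_angle_toReal_eq_arg, Complex.arg_pow_coe_angle, ← Real.Angle.coe_nsmul,
    nsmul_eq_mul, Real.Angle.toReal_coe_eq_self_iff]
  exact h.imp_right le_of_lt

theorem abs_arg_lt_pi_of_ne_neg_ofReal {z : ℂ} (h : ∀ t : ℝ, 0 ≤ t → z ≠ -t) :
    |z.arg| < Real.pi := by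
  refine (Complex.abs_arg_le_pi z).lt_of_ne fun habs => h ‖z‖ (norm_nonneg z) ?_
  have hpi : z.arg = Real.pi :=
    ((abs_eq Real.pi_pos.le).1 habs).resolve_right (Complex.neg_pi_lt_arg z).ne'
  conv_lhs => rw [← Complex.norm_mul_exp_arg_mul_I z, hpi, Complex.exp_pi_mul_I, mul_neg_one]

theorem abs_arg_mul_le (z w : ℂ) : |(z * w).arg| ≤ |z.arg| + |w.arg| := by
  rcases eq_or_ne z 0 with rfl | hz
  · simp
  rcases eq_or_ne w 0 with rfl | hw
  · simp
  refine le_trans ?_ (abs_add_le z.arg w.arg)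
  rcases lt_or_ge |z.arg + w.arg| Real.pi with hlt | hge
  · rw [Complex.arg_mul hz hw ⟨(abs_lt.1 hlt).1, (abs_lt.1 hlt).2.le⟩]
  · exact (Complex.abs_arg_le_pi _).trans hge

theorem abs_arg_le_abs_im_div_re {z : ℂ} (hz : 0 < z.re) : |z.arg| ≤ |z.im| / z.re := by
  have hlt : |z.arg| < Real.pi / 2 := Complex.abs_arg_lt_pi_div_two_iff.2 (.inl hz)
  calc |z.arg| ≤ Real.tan |z.arg| := Real.le_tan (abs_nonneg _) hlt
    _ ≤ |Real.tan z.arg| := by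
      rcases abs_choice z.arg with h | h <;> rw [h]
      · exact le_abs_self _
      · rw [Real.tan_neg]
        exact neg_le_abs _
    _ = |z.im| / z.re := by rw [Complex.tan_arg, abs_div, abs_of_pos hz]

theorem norm_mul_re_sub_le_re_mul (z w : ℂ) : ‖z‖ * (w.re - |z.arg| * ‖w‖) ≤ (z * w).re := by
  have hrot : ‖(Complex.exp (Complex.I * z.arg) - 1) * w‖ ≤ |z.arg| * ‖w‖ := by
    rw [norm_mul]
    gcongr
    exact Real.norm_exp_I_mul_ofReal_sub_one_le
  have hzw : z * w = ‖z‖ * (w + (Complex.exp (Complex.I * z.arg) - 1) * w) := by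
    conv_lhs => rw [← Complex.norm_mul_exp_arg_mul_I z, mul_comm (z.arg : ℂ)]
    ring
  rw [hzw, Complex.re_ofReal_mul, Complex.add_re]
  gcongr
  have := neg_le_of_abs_le ((Complex.abs_re_le_norm _).trans hrot)
  linarith

theorem norm_one_sub_le_one_sub_re_add_sq {z : ℂ} (hz : ‖z‖ ≤ 1 / 2) :
    ‖1 - z‖ ≤ 1 - z.re + ‖z‖ ^ 2 := by
  have hre : z.re ≤ 1 / 2 := (Complex.re_le_norm z).trans hz
  refine abs_le_of_sq_le_sq' ?_ (by nlinarith [sq_nonneg ‖z‖]) |>.2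
  have h1 := Complex.sq_norm (1 - z)
  have h2 := Complex.sq_norm z
  simp only [Complex.normSq_apply, Complex.sub_re, Complex.sub_im, Complex.one_re,
    Complex.one_im] at h1 h2
  nlinarith [mul_nonneg (sq_nonneg ‖z‖) (by linarith : 0 ≤ 1 / 2 - z.re), sq_nonneg z.re,
    sq_nonneg (‖z‖ ^ 2)]

theorem abs_im_lt_mul_re_of_norm_sub_sub_one_le {u u' : ℂ} {ε : ℝ} (hε : ε ≤ 1)
    (hu : |u.im| < ε * u.re) (h : ‖u' - u - 1‖ ≤ ε / 2) :
    u.re + 1 / 2 ≤ u'.re ∧ |u'.im| < ε * u'.re := by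
  have hε0 : 0 ≤ ε := by linarith [norm_nonneg (u' - u - 1)]
  have hre := neg_le_of_abs_le ((Complex.abs_re_le_norm _).trans h)
  have him := (Complex.abs_im_le_norm _).trans h
  simp only [Complex.sub_re, Complex.sub_im, Complex.one_re, Complex.one_im, sub_zero] at hre him
  have hgrow : u.re + 1 / 2 ≤ u'.re := by linarith
  refine ⟨hgrow, ?_⟩
  calc |u'.im| = |u.im + (u'.im - u.im)| := by rw [add_sub_cancel]
    _ ≤ |u.im| + |u'.im - u.im| := abs_add_le _ _
    _ < ε * (u.re + 1 / 2) := by linarith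
    _ ≤ ε * u'.re := by gcongr

end Geometry

section Asymptotics

variable {ι 𝕜 : Type*} [NontriviallyNormedField 𝕜] {l : Filter ι} {x x' : ι → 𝕜} {a : 𝕜} {r : ℕ}

theorem tendsto_div_sub_one_div_pow (hx0 : ∀ᶠ i in l, x i ≠ 0)
    (hx' : (fun i => x' i - x i - a * x i ^ (r + 1)) =o[l] fun i => x i ^ (r + 1)) :
    Tendsto (fun i => (x' i / x i - 1) / x i ^ r) l (𝓝 a) := by
  have h := hx'.tendsto_div_nhds_zero.add_const a
  rw [zero_add] at h
  refine h.congr' ?_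
  filter_upwards [hx0] with i hi
  field_simp
  ring

theorem tendsto_div_one_of_isLittleO (hr : r ≠ 0) (hx : Tendsto x l (𝓝[≠] 0))
    (hx' : (fun i => x' i - x i - a * x i ^ (r + 1)) =o[l] fun i => x i ^ (r + 1)) :
    Tendsto (fun i => x' i / x i) l (𝓝 1) := by
  obtain ⟨hlim, hx0⟩ := tendsto_nhdsWithin_iff.1 hx
  have h := ((tendsto_div_sub_one_div_pow hx0 hx').mul (hlim.pow r)).add_const 1
  rw [zero_pow hr, mul_zero, zero_add] at h
  refine h.congr' ?_
  filter_upwards [hx0] with i hi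
  have : x i ≠ 0 := hi
  field_simp
  ring

/-- The increment is `(x' / x - 1) / x ^ r` times the difference quotient of `w ↦ (w ^ r)⁻¹` between
`1` and `x' / x`. -/
theorem tendsto_inv_pow_sub_inv_pow (hr : r ≠ 0) (hx : Tendsto x l (𝓝[≠] 0))
    (hx' : (fun i => x' i - x i - a * x i ^ (r + 1)) =o[l] fun i => x i ^ (r + 1)) :
    Tendsto (fun i => (x' i ^ r)⁻¹ - (x i ^ r)⁻¹) l (𝓝 (-(r * a))) := by
  have hratio := tendsto_div_one_of_isLittleO hr hx hx'
  have hx0 := (tendsto_nhdsWithin_iff.1 hx).2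
  set g := dslope (fun w : 𝕜 => (w ^ r)⁻¹) 1 with hg
  have hderiv : HasDerivAt (fun w : 𝕜 => (w ^ r)⁻¹) (-r) 1 := by
    simpa using (hasDerivAt_pow r (1 : 𝕜)).fun_inv (by simp)
  have hg1 : Tendsto g (𝓝 1) (𝓝 (-r)) := by
    have := (continuousAt_dslope_same.2 hderiv.differentiableAt).tendsto
    rwa [dslope_same, hderiv.deriv] at this
  have h := (tendsto_div_sub_one_div_pow hx0 hx').mul (hg1.comp hratio)
  rw [mul_neg, mul_comm] at h
  refine h.congr' ?_
  filter_upwards [hx0, hratio.eventually_ne one_ne_zero] with i hi hi'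
  have hi : x i ≠ 0 := hi
  have hi' : x' i ≠ 0 := fun h0 => hi' (by rw [h0, zero_div])
  have hslope : (x' i / x i - 1) * g (x' i / x i) = x i ^ r / x' i ^ r - 1 := by
    rw [← smul_eq_mul, hg, sub_smul_dslope, div_pow, inv_div, one_pow, inv_one]
  calc (x' i / x i - 1) / x i ^ r * g (x' i / x i)
      = (x' i / x i - 1) * g (x' i / x i) / x i ^ r := by ring
    _ = (x' i ^ r)⁻¹ - (x i ^ r)⁻¹ := by
      rw [hslope]
      field_simp

theorem isLittleO_pow_div_pow_sub_one (hr : 2 ≤ r) (hx : Tendsto x l (𝓝[≠] 0))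
    (hx' : (fun i => x' i - x i - a * x i ^ (r + 1)) =o[l] fun i => x i ^ (r + 1)) :
    (fun i => x i ^ r / x' i ^ r - 1) =o[l] x := by
  obtain ⟨hlim, hx0⟩ := tendsto_nhdsWithin_iff.1 hx
  have hinv := (tendsto_inv_pow_sub_inv_pow (by lia) hx hx').isBigO_one 𝕜
  have hpow : (fun i => x i ^ r) =o[l] x :=
    (isLittleO_pow_id (𝕜 := 𝕜) (by lia)).comp_tendsto hlim
  refine (hpow.mul_isBigO hinv).congr' ?_ (.of_forall fun i => mul_one _)
  filter_upwards [hx0] with i hi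
  have : x i ^ r ≠ 0 := pow_ne_zero r hi
  rw [mul_sub, mul_inv_cancel₀ this, div_eq_mul_inv]

theorem isLittleO_div_pow_sub {y y' : ι → 𝕜} (hr : 2 ≤ r) (hx : Tendsto x l (𝓝[≠] 0))
    (hx' : (fun i => x' i - x i - a * x i ^ (r + 1)) =o[l] fun i => x i ^ (r + 1))
    (hy : ∀ᶠ i in l, ‖y i‖ ≤ ‖x i‖ ^ r)
    (hy' : (fun i => y' i - y i * (1 - x i)) =o[l] fun i => x i ^ (r + 1)) :
    (fun i => y' i / x' i ^ r - y i / x i ^ r * (1 - x i)) =o[l] x := by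
  obtain ⟨hlim, hx0⟩ := tendsto_nhdsWithin_iff.1 hx
  have hratio := isLittleO_pow_div_pow_sub_one hr hx hx'
  have herror : (fun i => (y' i - y i * (1 - x i)) / x' i ^ r) =o[l] x := by
    have hbdd : (fun i => x i ^ r / x' i ^ r) =O[l] fun _ => (1 : 𝕜) := by
      have h : Tendsto (fun i => x i / x' i) l (𝓝 1⁻¹) := by
        simpa only [inv_div] using (tendsto_div_one_of_isLittleO (by lia) hx hx').inv₀ one_ne_zero
      simpa only [div_pow] using (h.pow r).isBigO_one 𝕜
    refine (hy'.mul_isBigO (isBigO_refl (fun i => (x' i ^ r)⁻¹) l)).congr_left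
      (fun i => (div_eq_mul_inv _ _).symm) |>.trans_isBigO ?_
    exact ((isBigO_refl x l).mul hbdd).congr (fun i => by ring) fun i => mul_one _
  have hslope : (fun i => y i / x i ^ r * (1 - x i)) =O[l] fun _ => (1 : 𝕜) := by
    have hq : (fun i => y i / x i ^ r) =O[l] fun _ => (1 : 𝕜) := by
      refine IsBigO.of_bound 1 ?_
      filter_upwards [hy] with i hi
      rw [norm_div, norm_pow, norm_one, mul_one]
      exact div_le_one_of_le₀ hi (by positivity)
    simpa using hq.mul ((hlim.const_sub 1).isBigO_one 𝕜)
  refine (herror.add ((hslope.mul_isLittleO hratio).congr_right fun i => one_mul _)).congr' ?_ .rfl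
  filter_upwards [hx0] with i hi
  have : x i ≠ 0 := hi
  field_simp
  ring

end Asymptotics

theorem eventually_norm_lt_pow {ι : Type*} {l : Filter ι} {x x' y y' : ι → ℂ} {a : ℂ} {r : ℕ}
    {c : ℝ} (hr : 2 ≤ r) (hc : 0 < c) (hx : Tendsto x l (𝓝[≠] 0))
    (hx' : (fun i => x' i - x i - a * x i ^ (r + 1)) =o[l] fun i => x i ^ (r + 1))
    (hy : ∀ᶠ i in l, ‖y i‖ ≤ ‖x i‖ ^ r)
    (hy' : (fun i => y' i - y i * (1 - x i)) =o[l] fun i => x i ^ (r + 1)) :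
    ∀ᶠ i in l, c * ‖x i‖ ≤ (x i).re → ‖y' i‖ < ‖x' i‖ ^ r := by
  obtain ⟨hlim, hx0⟩ := tendsto_nhdsWithin_iff.1 hx
  have hsmall : ∀ᶠ i in l, ‖x i‖ < min (1 / 2) (c / 4) :=
    hlim.norm.eventually_lt_const (by simp [hc])
  filter_upwards [hx0, hy, hsmall, (isLittleO_div_pow_sub hr hx hx' hy hy').bound (by positivity :
    0 < c / 4), (tendsto_div_one_of_isLittleO (by lia) hx hx').eventually_ne one_ne_zero]
    with i hi hyi hxi hq hratio hre
  obtain ⟨hxi2, hxic⟩ := lt_min_iff.1 hxi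
  have hxpos : 0 < ‖x i‖ := norm_pos_iff.2 hi
  have hx'pos : 0 < ‖x' i‖ := norm_pos_iff.2 fun h0 => hratio (by rw [h0, zero_div])
  have hslope : ‖y i / x i ^ r * (1 - x i)‖ ≤ 1 - (x i).re + ‖x i‖ ^ 2 := by
    rw [norm_mul]
    refine (mul_le_of_le_one_left (norm_nonneg _) ?_).trans
      (norm_one_sub_le_one_sub_re_add_sq hxi2.le)
    rw [norm_div, norm_pow]
    exact div_le_one_of_le₀ hyi (by positivity)
  have hlt : ‖y' i / x' i ^ r‖ < 1 := by
    calc ‖y' i / x' i ^ r‖ ≤ ‖y i / x i ^ r * (1 - x i)‖ +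
          ‖y' i / x' i ^ r - y i / x i ^ r * (1 - x i)‖ := norm_le_norm_add_norm_sub' _ _
      _ ≤ 1 - (x i).re + ‖x i‖ ^ 2 + c / 4 * ‖x i‖ := add_le_add hslope hq
      _ < 1 := by nlinarith
  rwa [norm_div, norm_pow, div_lt_one (by positivity)] at hlt

section Petal

/-- The Fatou coordinate `(v / x) ^ r` at the origin, written so that `x / v` appears. If
`r * a * v ^ r = -1`, it conjugates `x ↦ x + a * x ^ (r + 1) + o(x ^ (r + 1))` to a map asymptotic
to the translation `u ↦ u + 1` near infinity. -/
noncomputable def fatouCoord (v : ℂ) (r : ℕ) (x : ℂ) : ℂ := ((x / v) ^ r)⁻¹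

/-- The branch along `v` of the preimage under `fatouCoord v r` of the cone `|Im u| < ε * Re u`.
The condition on the argument selects one of the `r` branches. -/
def petal (v : ℂ) (r : ℕ) (ε : ℝ) : Set ℂ :=
  {x | r * |(x / v).arg| < Real.pi / 2 ∧ |(fatouCoord v r x).im| < ε * (fatouCoord v r x).re}

variable {v x : ℂ} {r : ℕ} {ε : ℝ}

theorem ne_zero_of_fatouCoord_re_pos (hr : r ≠ 0) (h : 0 < (fatouCoord v r x).re) : x / v ≠ 0 := by
  intro h0
  simp [fatouCoord, h0, hr] at h

theorem fatouCoord_re_pos_of_mem_petal (hε : 0 < ε) (hx : x ∈ petal v r ε) :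
    0 < (fatouCoord v r x).re :=
  pos_of_mul_pos_right ((abs_nonneg _).trans_lt hx.2) hε.le

theorem div_ne_zero_of_mem_petal (hr : r ≠ 0) (hε : 0 < ε) (hx : x ∈ petal v r ε) : x / v ≠ 0 :=
  ne_zero_of_fatouCoord_re_pos hr (fatouCoord_re_pos_of_mem_petal hε hx)

theorem continuousAt_fatouCoord (hx : x / v ≠ 0) : ContinuousAt (fatouCoord v r) x := by
  unfold fatouCoord
  exact ((continuousAt_id.div_const v).pow r).inv₀ (pow_ne_zero r hx)

theorem fatouCoord_ofReal_mul (hv : v ≠ 0) (s : ℝ) :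
    fatouCoord v r (s * v) = ((s ^ r)⁻¹ : ℝ) := by
  rw [fatouCoord, mul_div_cancel_right₀ _ hv]
  push_cast
  rfl

theorem ofReal_mul_mem_petal (hv : v ≠ 0) (hε : 0 < ε) {s : ℝ} (hs : 0 < s) :
    (s * v : ℂ) ∈ petal v r ε := by
  refine ⟨?_, ?_⟩
  · rw [mul_div_cancel_right₀ _ hv, Complex.arg_ofReal_of_nonneg hs.le, abs_zero, mul_zero]
    positivity
  · rw [fatouCoord_ofReal_mul hv, Complex.ofReal_im, Complex.ofReal_re, abs_zero]
    positivity

theorem isOpen_petal (hr : r ≠ 0) (hε : 0 < ε) : IsOpen (petal v r ε) := by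
  rw [isOpen_iff_eventually]
  rintro x ⟨harg, hcone⟩
  have hx : x / v ≠ 0 := div_ne_zero_of_mem_petal hr hε ⟨harg, hcone⟩
  have hslit : x / v ∈ Complex.slitPlane := by
    refine Complex.mem_slitPlane_iff_arg.2 ⟨fun hpi => ?_, hx⟩
    have hr1 : (1 : ℝ) ≤ r := by exact_mod_cast Nat.one_le_iff_ne_zero.2 hr
    rw [hpi, abs_of_pos Real.pi_pos] at harg
    nlinarith [Real.pi_pos]
  have hcont_arg : ContinuousAt (fun w => r * |(w / v).arg|) x :=
    ((Complex.continuousAt_arg hslit).comp (f := fun w => w / v) (by fun_prop)).abs.const_mul _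
  have hcont := continuousAt_fatouCoord (r := r) hx
  filter_upwards [hcont_arg.eventually_lt continuousAt_const harg,
    (Complex.continuous_im.continuousAt.comp hcont).abs.eventually_lt
      ((Complex.continuous_re.continuousAt.comp hcont).const_mul ε) hcone] with w h1 h2
  exact ⟨h1, h2⟩

theorem abs_arg_fatouCoord (h : r * |(x / v).arg| < Real.pi) :
    |(fatouCoord v r x).arg| = r * |(x / v).arg| := by
  rw [fatouCoord, Complex.abs_arg_inv, arg_pow_eq_natCast_mul h, abs_mul, Nat.abs_cast]

theorem abs_arg_div_le_of_mem_petal (hr : r ≠ 0) (hε : 0 < ε) (hx : x ∈ petal v r ε) :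
    |(x / v).arg| ≤ ε := by
  have hr1 : (1 : ℝ) ≤ r := by exact_mod_cast Nat.one_le_iff_ne_zero.2 hr
  have hre := fatouCoord_re_pos_of_mem_petal hε hx
  calc |(x / v).arg| ≤ r * |(x / v).arg| := le_mul_of_one_le_left (abs_nonneg _) hr1
    _ = |(fatouCoord v r x).arg| :=
      (abs_arg_fatouCoord (hx.1.trans (half_lt_self Real.pi_pos))).symm
    _ ≤ |(fatouCoord v r x).im| / (fatouCoord v r x).re := abs_arg_le_abs_im_div_re hre
    _ ≤ ε := (div_le_iff₀ hre).2 hx.2.le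

theorem mul_norm_le_re_of_mem_petal (hr : r ≠ 0) (hε : 0 < ε) (hεv : 2 * ε * ‖v‖ ≤ v.re)
    (hx : x ∈ petal v r ε) : ε * ‖x‖ ≤ x.re := by
  have hv : v ≠ 0 := (div_ne_zero_iff.1 (div_ne_zero_of_mem_petal hr hε hx)).2
  have harg := abs_arg_div_le_of_mem_petal hr hε hx
  calc ε * ‖x‖ = ‖x / v‖ * (ε * ‖v‖) := by
        rw [norm_div]
        field_simp [norm_ne_zero_iff.2 hv]
    _ ≤ ‖x / v‖ * (v.re - |(x / v).arg| * ‖v‖) := by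
      gcongr
      nlinarith [norm_nonneg v]
    _ ≤ (x / v * v).re := norm_mul_re_sub_le_re_mul _ _
    _ = x.re := by rw [div_mul_cancel₀ x hv]

theorem tendsto_nhds_zero_of_fatouCoord_re (hr : r ≠ 0) {ι : Type*} {l : Filter ι} {x : ι → ℂ}
    (h : Tendsto (fun i => (fatouCoord v r (x i)).re) l atTop) : Tendsto x l (𝓝 0) := by
  have hinv : Tendsto (fun i => ‖(x i / v) ^ r‖) l (𝓝 0) := by
    have := tendsto_inv_atTop_zero.comp (tendsto_atTop_mono (fun i => Complex.re_le_norm _) h)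
    simpa [Function.comp_def, fatouCoord] using this
  have hdiv : Tendsto (fun i => x i / v) l (𝓝 0) := by
    have := (isLittleO_one_iff ℝ).2 (tendsto_zero_iff_norm_tendsto_zero.2 hinv)
    exact (isLittleO_one_iff ℝ).1 (IsLittleO.of_pow (by simpa [Pi.pow_def] using this) hr)
  refine (zero_mul v ▸ hdiv.mul_const v).congr' ?_
  filter_upwards [h.eventually_gt_atTop 0] with i hi
  exact div_mul_cancel₀ _ (div_ne_zero_iff.1 (ne_zero_of_fatouCoord_re_pos hr hi)).2

theorem tendsto_fatouCoord_sub {ι : Type*} {l : Filter ι} {x x' : ι → ℂ} {a : ℂ} (hr : r ≠ 0)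
    (hv : r * a * v ^ r = -1) (hx : Tendsto x l (𝓝[≠] 0))
    (hx' : (fun i => x' i - x i - a * x i ^ (r + 1)) =o[l] fun i => x i ^ (r + 1)) :
    Tendsto (fun i => fatouCoord v r (x' i) - fatouCoord v r (x i)) l (𝓝 1) := by
  have h := (tendsto_inv_pow_sub_inv_pow hr hx hx').const_mul (v ^ r)
  rw [show v ^ r * -(r * a) = 1 by linear_combination -hv] at h
  refine h.congr fun i => ?_
  simp only [fatouCoord, div_pow, inv_div]
  ring

theorem eventually_mem_petal {ι : Type*} {l : Filter ι} {x x' : ι → ℂ} {a : ℂ} (hr : r ≠ 0)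
    (hv : r * a * v ^ r = -1) (hε : 0 < ε) (hε1 : ε ≤ 1) (hx : Tendsto x l (𝓝[≠] 0))
    (hx' : (fun i => x' i - x i - a * x i ^ (r + 1)) =o[l] fun i => x i ^ (r + 1)) :
    ∀ᶠ i in l, x i ∈ petal v r ε → x' i ∈ petal v r ε ∧
      (fatouCoord v r (x i)).re + 1 / 2 ≤ (fatouCoord v r (x' i)).re := by
  have hratio := tendsto_div_one_of_isLittleO hr hx hx'
  have harg : Tendsto (fun i => r * |(x' i / x i).arg|) l (𝓝 0) := by
    have := (Complex.continuousAt_arg Complex.one_mem_slitPlane).tendsto.comp hratio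
    simpa using (this.abs.const_mul (r : ℝ))
  have hstep : ∀ᶠ i in l, ‖fatouCoord v r (x' i) - fatouCoord v r (x i) - 1‖ ≤ ε / 2 := by
    have := ((tendsto_fatouCoord_sub hr hv hx hx').sub_const 1).norm
    rw [sub_self, norm_zero] at this
    exact this.eventually_le_const (half_pos hε)
  filter_upwards [(tendsto_nhdsWithin_iff.1 hx).2, harg.eventually_lt_const Real.pi_div_two_pos,
    hstep] with i hi hargi hstepi hmem
  obtain ⟨hgrow, hcone⟩ := abs_im_lt_mul_re_of_norm_sub_sub_one_le hε1 hmem.2 hstepi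
  have hre : 0 < (fatouCoord v r (x' i)).re := by
    linarith [fatouCoord_re_pos_of_mem_petal hε hmem]
  have hlt : r * |(x' i / v).arg| < Real.pi := by
    have hmul : x' i / v = x i / v * (x' i / x i) := by
      have : x i ≠ 0 := hi
      field_simp
    calc r * |(x' i / v).arg| ≤ r * (|(x i / v).arg| + |(x' i / x i).arg|) := by
          rw [hmul]
          gcongr
          exact abs_arg_mul_le _ _
      _ < Real.pi := by linarith [hmem.1]
  refine ⟨⟨?_, hcone⟩, hgrow⟩
  rw [← abs_arg_fatouCoord hlt]
  exact Complex.abs_arg_lt_pi_div_two_iff.2 (.inl hre)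

end Petal

/-- The region in which the second variable is negligible: there `‖(x, y)‖` is comparable to `‖x‖`
near the origin, and `y ^ 2` and the perturbations of the map are `o(x ^ (r + 1))`. -/
def cuspRegion (r : ℕ) : Set (ℂ × ℂ) :=
  {p | p.1 ≠ 0 ∧ ‖p.2‖ ≤ ‖p.1‖ ^ r}

theorem tendsto_fst_cuspRegion (r : ℕ) :
    Tendsto (fun p : ℂ × ℂ => p.1) (𝓝[cuspRegion r] 0) (𝓝[≠] 0) :=
  tendsto_nhdsWithin_iff.2 ⟨continuous_fst.continuousWithinAt.tendsto,
    eventually_mem_nhdsWithin.mono fun _ hp => hp.1⟩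

theorem isBigO_snd_fst_pow (r : ℕ) :
    (fun p : ℂ × ℂ => p.2) =O[𝓝[cuspRegion r] 0] fun p => p.1 ^ r :=
  .of_bound 1 <| eventually_mem_nhdsWithin.mono fun p hp => by
    rw [one_mul, norm_pow]
    exact hp.2

theorem isLittleO_fst_pow_fst_pow {m n : ℕ} (h : m < n) (r : ℕ) :
    (fun p : ℂ × ℂ => p.1 ^ n) =o[𝓝[cuspRegion r] 0] fun p => p.1 ^ m :=
  (isLittleO_pow_pow (𝕜 := ℂ) h).comp_tendsto
    ((tendsto_fst_cuspRegion r).mono_right nhdsWithin_le_nhds)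

theorem isLittleO_snd_sq {r : ℕ} (hr : 2 ≤ r) :
    (fun p : ℂ × ℂ => p.2 ^ 2) =o[𝓝[cuspRegion r] 0] fun p => p.1 ^ (r + 1) := by
  refine ((isBigO_snd_fst_pow r).pow 2).trans_isLittleO ?_
  simpa only [← pow_mul] using isLittleO_fst_pow_fst_pow (by lia : r + 1 < r * 2) r

theorem isLittleO_of_norm_le {r : ℕ} (hr : r ≠ 0) {η : ℂ × ℂ → ℂ} {C : ℝ}
    (hη : ∀ᶠ p : ℂ × ℂ in 𝓝 0, ‖η p‖ ≤ C * (‖p.2‖ * ‖p‖ ^ 2 + ‖p.1‖ ^ (r + 2))) :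
    η =o[𝓝[cuspRegion r] 0] fun p => p.1 ^ (r + 1) := by
  have hsnd := isBigO_snd_fst_pow r
  have hnorm : (fun p : ℂ × ℂ => p) =O[𝓝[cuspRegion r] 0] fun p => p.1 := by
    refine (isBigO_refl _ _).prod_left (hsnd.trans ?_)
    rcases (Nat.one_le_iff_ne_zero.2 hr).eq_or_lt with rfl | hr1
    · simpa only [pow_one] using isBigO_refl _ _
    · simpa only [pow_one] using (isLittleO_fst_pow_fst_pow hr1 r).isBigO
  have hbound : (fun p : ℂ × ℂ => C * (‖p.2‖ * ‖p‖ ^ 2 + ‖p.1‖ ^ (r + 2)))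
      =O[𝓝[cuspRegion r] 0] fun p => p.1 ^ (r + 2) := by
    refine (IsBigO.add ?_ ?_).const_mul_left C
    · exact (hsnd.norm_left.mul (hnorm.norm_left.pow 2)).congr_right fun p => (pow_add _ _ _).symm
    · simpa only [norm_pow] using (isBigO_refl (fun p : ℂ × ℂ => p.1 ^ (r + 2)) _).norm_left
  refine IsBigO.trans_isLittleO ?_ (isLittleO_fst_pow_fst_pow (Nat.lt_succ_self (r + 1)) r)
  exact (IsBigO.of_norm_eventuallyLE (hη.filter_mono nhdsWithin_le_nhds)).trans hbound

theorem tendsto_snd_div_fst_cuspRegion {r : ℕ} (hr : 2 ≤ r) :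
    Tendsto (fun p : ℂ × ℂ => p.2 / p.1) (𝓝[cuspRegion r] 0) (𝓝 0) :=
  ((isBigO_snd_fst_pow r).trans_isLittleO <| by
    simpa only [pow_one] using isLittleO_fst_pow_fst_pow (by lia : 1 < r) r).tendsto_div_nhds_zero

theorem tendsto_nhdsWithin_cuspRegion {v : ℂ} {r : ℕ} (hr : r ≠ 0) {ι : Type*} {l : Filter ι}
    {p : ι → ℂ × ℂ} (hp : ∀ᶠ i in l, p i ∈ cuspRegion r)
    (h : Tendsto (fun i => (fatouCoord v r (p i).1).re) l atTop) :
    Tendsto p l (𝓝[cuspRegion r] 0) := by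
  have hfst : Tendsto (fun i => (p i).1) l (𝓝 0) := tendsto_nhds_zero_of_fatouCoord_re hr h
  have hsnd : Tendsto (fun i => (p i).2) l (𝓝 0) :=
    squeeze_zero_norm' (hp.mono fun i hi => hi.2) (by simpa [hr] using hfst.norm.pow r)
  exact tendsto_nhdsWithin_iff.2 ⟨hfst.prodMk_nhds hsnd, hp⟩

/-- The candidate domain of attraction: the part of the cusp region lying over the points of a petal
whose Fatou coordinate has real part larger than `R`. -/
def attractingRegion (v : ℂ) (r : ℕ) (ε R : ℝ) : Set (ℂ × ℂ) :=
  {p | p.1 ∈ petal v r ε ∧ R < (fatouCoord v r p.1).re ∧ ‖p.2‖ < ‖p.1‖ ^ r}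

section AttractingRegion

variable {v : ℂ} {r : ℕ} {ε R : ℝ}

theorem attractingRegion_subset_cuspRegion (hr : r ≠ 0) (hε : 0 < ε) :
    attractingRegion v r ε R ⊆ cuspRegion r := fun _ hp =>
  ⟨(div_ne_zero_iff.1 (div_ne_zero_of_mem_petal hr hε hp.1)).1, hp.2.2.le⟩

theorem isOpen_attractingRegion (hr : r ≠ 0) (hε : 0 < ε) :
    IsOpen (attractingRegion v r ε R) := by
  rw [isOpen_iff_eventually]
  rintro p ⟨hpetal, hR, hsnd⟩
  have hcont : ContinuousAt (fun q : ℂ × ℂ => (fatouCoord v r q.1).re) p :=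
    Complex.continuous_re.continuousAt.comp <|
      (continuousAt_fatouCoord (div_ne_zero_of_mem_petal hr hε hpetal)).comp continuousAt_fst
  filter_upwards [continuousAt_fst.eventually_mem ((isOpen_petal hr hε).mem_nhds hpetal),
    continuousAt_const.eventually_lt hcont hR,
    continuousAt_snd.norm.eventually_lt (continuousAt_fst.norm.pow r) hsnd] with q h1 h2 h3
  exact ⟨h1, h2, h3⟩

theorem zero_mem_closure_attractingRegion (hr : r ≠ 0) (hv : v ≠ 0) (hε : 0 < ε) :
    (0 : ℂ × ℂ) ∈ closure (attractingRegion v r ε R) := by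
  have hlim : Tendsto (fun s : ℝ => ((s * v, 0) : ℂ × ℂ)) (𝓝[>] 0) (𝓝 0) := by
    have : Continuous fun s : ℝ => ((s * v, 0) : ℂ × ℂ) := by fun_prop
    simpa [Prod.zero_eq_mk] using (this.tendsto 0).mono_left nhdsWithin_le_nhds
  have hre : Tendsto (fun s : ℝ => (s ^ r)⁻¹) (𝓝[>] 0) atTop := by
    simpa [Function.comp_def] using (tendsto_pow_atTop hr).comp (tendsto_inv_nhdsGT_zero (𝕜 := ℝ))
  refine mem_closure_of_tendsto hlim ?_
  filter_upwards [self_mem_nhdsWithin, hre.eventually_gt_atTop R] with s hs hR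
  have hs0 : (s : ℂ) ≠ 0 := Complex.ofReal_ne_zero.2 hs.ne'
  refine ⟨ofReal_mul_mem_petal hv hε hs, by rwa [fatouCoord_ofReal_mul hv], ?_⟩
  rw [norm_zero]
  exact pow_pos (norm_pos_iff.2 (mul_ne_zero hs0 hv)) r

theorem exists_forall_mem_attractingRegion (hr : r ≠ 0) (hε : 0 < ε) {P : ℂ × ℂ → Prop}
    (h : ∀ᶠ p in 𝓝[cuspRegion r] 0, P p) (v : ℂ) :
    ∃ R, ∀ p ∈ attractingRegion v r ε R, P p := by
  have hlim : Tendsto id (comap (fun p : ℂ × ℂ => (fatouCoord v r p.1).re) atTop ⊓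
      𝓟 (cuspRegion r)) (𝓝[cuspRegion r] 0) :=
    tendsto_nhdsWithin_cuspRegion hr (eventually_inf_principal.2 (.of_forall fun _ hp => hp))
      (tendsto_comap.mono_left inf_le_left)
  obtain ⟨R, -, hR⟩ := ((atTop_basis_Ioi.comap _).inf_principal _).eventually_iff.1
    (hlim.eventually h)
  exact ⟨R, fun p hp => hR ⟨hp.2.1, attractingRegion_subset_cuspRegion hr hε hp⟩⟩

theorem exists_mapsTo_attractingRegion {a : ℂ} {G : ℂ × ℂ → ℂ × ℂ} (hr : 2 ≤ r) (hε : 0 < ε)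
    (hε1 : ε ≤ 1) (hεv : 2 * ε * ‖v‖ ≤ v.re) (hav : r * a * v ^ r = -1)
    (hfst : (fun p => (G p).1 - p.1 - a * p.1 ^ (r + 1)) =o[𝓝[cuspRegion r] 0]
      fun p => p.1 ^ (r + 1))
    (hsnd : (fun p => (G p).2 - p.2 * (1 - p.1)) =o[𝓝[cuspRegion r] 0] fun p => p.1 ^ (r + 1)) :
    ∃ R, MapsTo G (attractingRegion v r ε R) (attractingRegion v r ε R) ∧
      ∀ p ∈ attractingRegion v r ε R,
        (fatouCoord v r p.1).re + 1 / 2 ≤ (fatouCoord v r (G p).1).re := by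
  have hr0 : r ≠ 0 := by lia
  have hx := tendsto_fst_cuspRegion r
  have hpetal := eventually_mem_petal hr0 hav hε hε1 hx hfst
  have hnorm := eventually_norm_lt_pow hr hε hx hfst
    (eventually_mem_nhdsWithin.mono fun p hp => hp.2) hsnd
  obtain ⟨R, hR⟩ := exists_forall_mem_attractingRegion hr0 hε (hpetal.and hnorm) v
  refine ⟨R, fun p hp => ?_, fun p hp => ((hR p hp).1 hp.1).2⟩
  obtain ⟨hmem, hgrow⟩ := (hR p hp).1 hp.1
  exact ⟨hmem, by linarith [hp.2.1],
    (hR p hp).2 (mul_norm_le_re_of_mem_petal hr0 hε hεv hp.1)⟩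

end AttractingRegion

theorem tendsto_iterate_atTop_of_add_le {α : Type*} {f : α → α} {s : Set α} {φ : α → ℝ} {c : ℝ}
    (hc : 0 < c) (hf : MapsTo f s s) (hφ : ∀ x ∈ s, φ x + c ≤ φ (f x)) {x : α} (hx : x ∈ s) :
    Tendsto (fun n => φ (f^[n] x)) atTop atTop := by
  have hle (n : ℕ) : n * c + φ x ≤ φ (f^[n] x) := by
    induction n with
    | zero => simp
    | succ n ih =>
      rw [Function.iterate_succ_apply']
      push_cast
      linarith [hφ _ (hf.iterate n hx)]
  exact tendsto_atTop_mono hle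
    (tendsto_atTop_add_const_right _ _ (tendsto_natCast_atTop_atTop.atTop_mul_const hc))

/-- `G` has a domain of attraction `Ω` to the origin along the direction `[1 : 0]`. The directions
`[x : y]` of the iterates converge in the affine chart `y / x` around `[1 : 0]`. -/
def HasDomainOfAttractionAlongFst (G : ℂ × ℂ → ℂ × ℂ) : Prop :=
  ∃ Ω : Set (ℂ × ℂ), Ω.Nonempty ∧ IsOpen Ω ∧ ((0, 0) : ℂ × ℂ) ∈ closure Ω \ Ω ∧
    ∀ p ∈ Ω,
      Tendsto (fun n => G^[n] p) atTop (𝓝 (0, 0)) ∧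
      (∀ n : ℕ, (G^[n] p).1 ≠ 0) ∧
      Tendsto (fun n => (G^[n] p).2 / (G^[n] p).1) atTop (𝓝 0)

theorem hasDomainOfAttractionAlongFst_of_isLittleO {a v : ℂ} {r : ℕ} {G : ℂ × ℂ → ℂ × ℂ}
    (hr : 2 ≤ r) (hv : 0 < v.re) (hav : r * a * v ^ r = -1)
    (hfst : (fun p => (G p).1 - p.1 - a * p.1 ^ (r + 1)) =o[𝓝[cuspRegion r] 0]
      fun p => p.1 ^ (r + 1))
    (hsnd : (fun p => (G p).2 - p.2 * (1 - p.1)) =o[𝓝[cuspRegion r] 0] fun p => p.1 ^ (r + 1)) :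
    HasDomainOfAttractionAlongFst G := by
  have hr0 : r ≠ 0 := by lia
  have hv0 : v ≠ 0 := fun h => by simp [h] at hv
  have hvnorm : 0 < ‖v‖ := norm_pos_iff.2 hv0
  set ε := v.re / (2 * ‖v‖) with hε_def
  have hε : 0 < ε := by positivity
  have hεv : 2 * ε * ‖v‖ = v.re := by rw [hε_def]; field_simp
  have hε1 : ε ≤ 1 := by nlinarith [Complex.re_le_norm v]
  obtain ⟨R, hmaps, hgrow⟩ := exists_mapsTo_attractingRegion hr hε hε1 hεv.le hav hfst hsnd
  have hsub := attractingRegion_subset_cuspRegion (v := v) (R := R) hr0 hε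
  have hclosure := zero_mem_closure_attractingRegion (R := R) hr0 hv0 hε
  refine ⟨attractingRegion v r ε R, closure_nonempty_iff.1 ⟨0, hclosure⟩,
    isOpen_attractingRegion hr0 hε, ⟨hclosure, fun h => (hsub h).1 rfl⟩, fun p hp => ?_⟩
  have hcusp (n : ℕ) : G^[n] p ∈ cuspRegion r := hsub (hmaps.iterate n hp)
  have hlim : Tendsto (fun n => G^[n] p) atTop (𝓝[cuspRegion r] 0) :=
    tendsto_nhdsWithin_cuspRegion hr0 (.of_forall hcusp)
      (tendsto_iterate_atTop_of_add_le one_half_pos hmaps hgrow hp)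
  exact ⟨hlim.mono_right nhdsWithin_le_nhds, fun n => (hcusp n).1,
    (tendsto_snd_div_fst_cuspRegion hr).comp hlim⟩

theorem exists_re_pos_mul_pow_eq_neg_one {a : ℂ} {r : ℕ}
    (h : (a ≠ 0 ∧ 3 ≤ r) ∨ (r = 2 ∧ ¬ ∃ t : ℝ, 0 ≤ t ∧ a = (t : ℂ))) :
    ∃ v : ℂ, 0 < v.re ∧ r * a * v ^ r = -1 := by
  have ha : a ≠ 0 := by
    rcases h with ⟨ha, -⟩ | ⟨-, hnot⟩
    · exact ha
    · rintro rfl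
      exact hnot ⟨0, le_rfl, by simp⟩
  have hr2 : 2 ≤ r := by lia
  have hr : (r : ℂ) ≠ 0 := by exact_mod_cast (by lia : r ≠ 0)
  set z : ℂ := -(r * a)⁻¹ with hz_def
  have hz : z ≠ 0 := by simp [hz_def, hr, ha]
  have harg : |z.arg| < r * (Real.pi / 2) := by
    rcases h with ⟨-, hr3⟩ | ⟨rfl, hnot⟩
    · have : (3 : ℝ) ≤ r := by exact_mod_cast hr3
      nlinarith [Complex.abs_arg_le_pi z, Real.pi_pos]
    · rw [Nat.cast_ofNat, mul_div_cancel₀ _ two_ne_zero]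
      refine abs_arg_lt_pi_of_ne_neg_ofReal fun t ht hzt => hnot ⟨(2 * t)⁻¹, by positivity, ?_⟩
      rw [hz_def, neg_inj, Nat.cast_ofNat, inv_eq_iff_eq_inv] at hzt
      push_cast
      rw [mul_inv, ← hzt]
      field_simp
  refine ⟨z ^ (((r : ℝ)⁻¹ : ℝ) : ℂ), re_cpow_ofReal_pos hz ?_, ?_⟩
  · rw [abs_mul, abs_inv, Nat.abs_cast, ← div_eq_mul_inv]
    exact (div_lt_iff₀' (by positivity)).2 harg
  · rw [Complex.ofReal_inv, Complex.ofReal_natCast, Complex.cpow_nat_inv_pow z (by lia), hz_def]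
    field_simp

theorem perturbed_g_has_domain_of_attraction_general (a : ℂ) (r : ℕ)
    (h : (a ≠ 0 ∧ 3 ≤ r) ∨ (r = 2 ∧ ¬ ∃ t : ℝ, 0 ≤ t ∧ a = (t : ℂ)))
    (η₁ η₂ : ℂ × ℂ → ℂ)
    (hη₁ : η₁ =o[𝓝[cuspRegion r] 0] fun p => p.1 ^ (r + 1))
    (hη₂ : η₂ =o[𝓝[cuspRegion r] 0] fun p => p.1 ^ (r + 1)) :
    HasDomainOfAttractionAlongFst fun q =>
      (q.1 - q.2 ^ 2 + a * q.1 ^ (r + 1) + η₁ q, q.2 - q.1 * q.2 + η₂ q) := by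
  have hr : 2 ≤ r := by lia
  obtain ⟨v, hv, hav⟩ := exists_re_pos_mul_pow_eq_neg_one h
  refine hasDomainOfAttractionAlongFst_of_isLittleO hr hv hav ?_ ?_
  · exact (hη₁.sub (isLittleO_snd_sq hr)).congr_left fun p => by ring
  · exact hη₂.congr_left fun p => by ring

/-- For `G(x,y) = (x - y² + a x^{r+1} + η₁(x,y), y - xy + η₂(x,y))`, where the perturbations
`ηᵢ` are holomorphic near the origin and satisfy `|ηᵢ(x,y)| ≤ C(|y|·‖(x,y)‖² + |x|^{r+2})` near
the origin, and either `a ≠ 0` and `r ≥ 3`, or `r = 2` and `a` is not a nonnegative real, there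
is a domain of attraction to the origin along `[1:0]`. -/
theorem perturbed_g_has_domain_of_attraction (a : ℂ) (r : ℕ)
    (h : (a ≠ 0 ∧ 3 ≤ r) ∨ (r = 2 ∧ ¬ ∃ t : ℝ, 0 ≤ t ∧ a = (t : ℂ)))
    (η₁ η₂ : ℂ × ℂ → ℂ)
    (hη₁ : AnalyticAt ℂ η₁ (0, 0)) (hη₂ : AnalyticAt ℂ η₂ (0, 0))
    (C : ℝ) (hC : 0 < C)
    (hbound : ∀ᶠ p : ℂ × ℂ in 𝓝 (0, 0),
      ‖η₁ p‖ ≤ C * (‖p.2‖ * ‖p‖ ^ 2 + ‖p.1‖ ^ (r + 2)) ∧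
      ‖η₂ p‖ ≤ C * (‖p.2‖ * ‖p‖ ^ 2 + ‖p.1‖ ^ (r + 2)))
    (G : ℂ × ℂ → ℂ × ℂ)
    (hG : G = fun q : ℂ × ℂ =>
      (q.1 - q.2 ^ 2 + a * q.1 ^ (r + 1) + η₁ q, q.2 - q.1 * q.2 + η₂ q)) :
    ∃ Ω : Set (ℂ × ℂ), Ω.Nonempty ∧ IsOpen Ω ∧ ((0, 0) : ℂ × ℂ) ∈ closure Ω \ Ω ∧
      ∀ p ∈ Ω,
        Tendsto (fun n => G^[n] p) atTop (𝓝 (0, 0)) ∧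
        (∀ n : ℕ, (G^[n] p).1 ≠ 0) ∧
        Tendsto (fun n => (G^[n] p).2 / (G^[n] p).1) atTop (𝓝 0) := by
  subst hG
  exact perturbed_g_has_domain_of_attraction_general a r h η₁ η₂
    (isLittleO_of_norm_le (by lia) (hbound.mono fun _ hp => hp.1))
    (isLittleO_of_norm_le (by lia) (hbound.mono fun _ hp => hp.2))
end
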